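/- arXiv:2507.11388 — 2 statements merged into one kernel-verified Lean document; each statement's English description precedes it below -/
import Mathlib

section
/- Let p be a prime and let T be an abelian p-group (every element of T has order a power of p). Then the following are equivalent: (a) T is Bassian-finite; (b) T is co-Hopfian; (c) T is relatively co-Hopfian. -/
/-- An abelian group `G` is *Bassian-finite* if there is no injective homomorphism
from `G` into a proper direct summand of `G`. -/
def BassianFinite (G : Type*) [AddCommGroup G] : Prop :=
  ∀ A B : AddSubgroup G, IsCompl A B → B ≠ ⊥ → ∀ φ : G →+ A, ¬ Function.Injective φ

/-- An abelian group `G` is *co-Hopfian* if every injective endomorphism of `G`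
is surjective. -/
def CoHopfian (G : Type*) [AddCommGroup G] : Prop :=
  ∀ φ : G →+ G, Function.Injective φ → Function.Surjective φ

/-- An abelian group `G` is *relatively co-Hopfian* if the image of every injective
endomorphism of `G` is an essential subgroup of `G`. -/
def RelativelyCoHopfian (G : Type*) [AddCommGroup G] : Prop :=
  ∀ φ : G →+ G, Function.Injective φ → ∀ B : AddSubgroup G, B ≠ ⊥ → φ.range ⊓ B ≠ ⊥

/-- The subgroup `p^n T`. -/
def pPow (p n : ℕ) (T : Type*) [AddCommGroup T] : AddSubgroup T :=
  (nsmulAddMonoidHom (α := T) (p ^ n)).range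

theorem mem_pPow {p n : ℕ} {T : Type*} [AddCommGroup T] {x : T} :
    x ∈ pPow p n T ↔ ∃ u : T, p ^ n • u = x := by
  simp [pPow, AddMonoidHom.mem_range]

theorem pPow_le {p m n : ℕ} (h : m ≤ n) {T : Type*} [AddCommGroup T] {x : T}
    (hx : x ∈ pPow p n T) : x ∈ pPow p m T := by
  obtain ⟨u, rfl⟩ := mem_pPow.1 hx
  obtain ⟨k, rfl⟩ := Nat.exists_eq_add_of_le h
  exact mem_pPow.2 ⟨p ^ k • u, by rw [smul_smul, pow_add]⟩

theorem pPow_map {p n : ℕ} {T : Type*} [AddCommGroup T] (φ : T →+ T) {x : T}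
    (hx : x ∈ pPow p n T) : φ x ∈ pPow p n T := by
  obtain ⟨u, rfl⟩ := mem_pPow.1 hx
  exact mem_pPow.2 ⟨φ u, by rw [map_nsmul]⟩

theorem mem_of_zsmul {p : ℕ} (hp : p.Prime) {T : Type*} [AddCommGroup T] (A : AddSubgroup T)
    {x : T} (hx : p • x ∈ A) {k : ℤ} (hk : ¬ (p : ℤ) ∣ k) (h : k • x ∈ A) : x ∈ A := by
  have hc : IsCoprime (p : ℤ) k :=
    ((Nat.prime_iff_prime_int.1 hp).coprime_iff_not_dvd).2 hk
  obtain ⟨a, b, hab⟩ := hc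
  have : x = a • (p • x) + b • (k • x) := by
    rw [← natCast_zsmul x p, smul_smul, smul_smul, ← add_smul, hab, one_smul]
  rw [this]
  exact A.add_mem (A.zsmul_mem hx a) (A.zsmul_mem h b)

/-- If everything killed into the subgroup after one multiplication by `p` is in it, it is all. -/
theorem all_mem_of_step {p : ℕ} {T : Type*} [AddCommGroup T]
    (hT : ∀ x : T, ∃ n : ℕ, p ^ n • x = 0) (S : AddSubgroup T)
    (h : ∀ x, p • x ∈ S → x ∈ S) (x : T) : x ∈ S := by
  obtain ⟨n, hn⟩ := hT x
  induction n generalizing x with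
  | zero => simp at hn; rw [hn]; exact S.zero_mem
  | succ n ih =>
    apply h
    apply ih
    rw [smul_smul, ← pow_succ]; exact hn

theorem inj_of_socle {p : ℕ} {T S : Type*} [AddCommGroup T] [AddCommGroup S]
    (hT : ∀ x : T, ∃ n : ℕ, p ^ n • x = 0) (f : T →+ S)
    (h : ∀ x, p • x = 0 → f x = 0 → x = 0) : Function.Injective f := by
  rw [injective_iff_map_eq_zero]
  intro x hx
  obtain ⟨n, hn⟩ := hT x
  induction n generalizing x with
  | zero => simpa using hn
  | succ n ih =>
    have h1 : p • x = 0 := ih (p • x) (by rw [map_nsmul, hx, smul_zero])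
      (by rw [smul_smul, ← pow_succ]; exact hn)
    exact h x h1 hx

theorem exists_compl {p : ℕ} (hp : p.Prime) {T : Type*} [AddCommGroup T]
    (hT : ∀ x : T, ∃ n : ℕ, p ^ n • x = 0) (K C : AddSubgroup T) (hKC : Disjoint K C)
    (h : ∀ A : AddSubgroup T, K ≤ A → Disjoint A C → ∀ x, ∀ a ∈ A, ∀ c ∈ C, p • x = a + c →
      ∃ c' ∈ C, c = p • c') : ∃ A, IsCompl A C := by
  obtain ⟨A, hKA, hA⟩ := zorn_le_nonempty₀ {A : AddSubgroup T | Disjoint A C} (by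
    intro c hc hch y hy
    refine ⟨sSup c, ?_, fun z hz => le_sSup hz⟩
    rw [Set.mem_ofPred_eq, AddSubgroup.disjoint_def]
    intro x hx hxC
    obtain ⟨s, hs, hxs⟩ := (AddSubgroup.mem_sSup_of_directedOn ⟨y, hy⟩ hch.directedOn).1 hx
    exact AddSubgroup.disjoint_def.1 (hc hs) hxs hxC) K hKC
  have hd : Disjoint A C := hA.prop
  refine ⟨A, hd, ?_⟩
  rw [codisjoint_iff, eq_top_iff]
  intro x _
  refine all_mem_of_step hT (A ⊔ C) ?_ x
  intro x hx
  obtain ⟨a, ha, c, hc, hac⟩ := AddSubgroup.mem_sup.1 hx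
  obtain ⟨c', hc', rfl⟩ := h A hKA hd x a ha c hc hac.symm
  have hx' : p • (x - c') ∈ A := by
    rw [smul_sub, ← hac, add_sub_cancel_right]; exact ha
  suffices h' : x - c' ∈ A ⊔ C by
    have := (A ⊔ C).add_mem h' (AddSubgroup.mem_sup_right hc')
    simpa using this
  generalize x - c' = y at hx'
  by_contra hy
  have hnd : ¬ Disjoint (A ⊔ AddSubgroup.zmultiples y) C := by
    intro hdis
    have := hA.le_of_ge hdis le_sup_left
    exact hy (AddSubgroup.mem_sup_left (this (AddSubgroup.mem_sup_right
      (AddSubgroup.mem_zmultiples y))))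
  apply hnd
  rw [AddSubgroup.disjoint_def]
  intro d hd1 hdC
  obtain ⟨a', ha', t, ht, hat⟩ := AddSubgroup.mem_sup.1 hd1
  obtain ⟨k, rfl⟩ := AddSubgroup.mem_zmultiples_iff.1 ht
  by_cases hk : (p : ℤ) ∣ k
  · obtain ⟨l, rfl⟩ := hk
    have : d ∈ A := by
      rw [← hat, mul_comm, mul_smul, natCast_zsmul]
      exact A.add_mem ha' (A.zsmul_mem hx' l)
    exact AddSubgroup.disjoint_def.1 hd this hdC
  · exfalso
    apply hy
    refine mem_of_zsmul hp _ (AddSubgroup.mem_sup_left hx') hk ?_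
    have : k • y = d - a' := by rw [← hat]; abel
    rw [this]
    exact (A ⊔ C).sub_mem (AddSubgroup.mem_sup_right hdC) (AddSubgroup.mem_sup_left ha')

/-- Divisibility of an integer-valued finitely supported function. -/
theorem finsupp_exists_smul {ι : Type*} (k : ℤ) (c : ι →₀ ℤ) (h : ∀ i, k ∣ c i) :
    ∃ d : ι →₀ ℤ, c = k • d := by
  choose f hf using h
  classical
  refine ⟨Finsupp.onFinset c.support (fun i => if c i = 0 then 0 else f i) ?_, ?_⟩
  · intro i hi
    rw [Finsupp.mem_support_iff]
    intro h0
    simp [h0] at hi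
  · ext i
    simp only [Finsupp.smul_apply, Finsupp.onFinset_apply, smul_eq_mul]
    split_ifs with h0
    · simp [h0]
    · exact hf i

/-- Data for a pure homogeneous subgroup. -/
theorem ker_dvd {p m : ℕ} {T : Type*} [AddCommGroup T] {ι : Type*}
    (g : (ι →₀ ℤ) →+ T)
    (ind : ∀ d : ι →₀ ℤ, g (p ^ m • d) ∈ pPow p (m + 1) T → ∀ i, (p : ℤ) ∣ d i)
    (c : ι →₀ ℤ) (hc : g c ∈ pPow p (m + 1) T) : ∃ d : ι →₀ ℤ, c = p ^ (m + 1) • d := by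
  have key : ∀ k, k ≤ m + 1 → ∃ d : ι →₀ ℤ, c = p ^ k • d := by
    intro k
    induction k with
    | zero => exact fun _ => ⟨c, by simp⟩
    | succ k ih =>
      intro hk
      obtain ⟨d, hd⟩ := ih (by omega)
      have h1 : p ^ m • d = p ^ (m - k) • c := by
        rw [hd, smul_smul, ← pow_add]; congr 2; omega
      obtain ⟨e, he⟩ := finsupp_exists_smul (p : ℤ) d (ind d (by
        rw [h1, map_nsmul]; exact AddSubgroup.nsmul_mem _ hc _))
      refine ⟨e, ?_⟩
      rw [hd, he, natCast_zsmul, smul_smul, pow_succ]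
  exact key _ le_rfl

theorem exists_compl_range {p m : ℕ} (hp : p.Prime) {T : Type*} [AddCommGroup T]
    (hT : ∀ x : T, ∃ n : ℕ, p ^ n • x = 0) {ι : Type*}
    (g : (ι →₀ ℤ) →+ T)
    (hg : ∀ d, g (p ^ (m + 1) • d) = 0)
    (ind : ∀ d : ι →₀ ℤ, g (p ^ m • d) ∈ pPow p (m + 1) T → ∀ i, (p : ℤ) ∣ d i) :
    ∃ A, IsCompl A g.range := by
  apply exists_compl hp hT (pPow p (m + 1) T) g.range
  · rw [AddSubgroup.disjoint_def]
    rintro _ hx ⟨c, rfl⟩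
    obtain ⟨d, rfl⟩ := ker_dvd g ind c hx
    exact hg d
  · rintro A hKA hd x a ha _ ⟨c, rfl⟩ hx
    have h1 : p ^ m • g c ∈ A := by
      have : p ^ m • g c = p ^ (m + 1) • x - p ^ m • a := by
        rw [pow_succ, mul_smul, hx, smul_add]; abel
      rw [this]
      exact A.sub_mem (hKA (mem_pPow.2 ⟨x, rfl⟩)) (A.nsmul_mem ha _)
    have h2 : p ^ m • g c = 0 :=
      AddSubgroup.disjoint_def.1 hd h1 (AddSubgroup.nsmul_mem g.range ⟨c, rfl⟩ _)
    obtain ⟨e, he⟩ := finsupp_exists_smul (p : ℤ) c (ind c (by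
      rw [map_nsmul, h2]; exact AddSubgroup.zero_mem _))
    exact ⟨g e, ⟨e, rfl⟩, by rw [he, natCast_zsmul, map_nsmul]⟩

/-- Bassian-finite: socle elements of finite height lie in the image of each injection. -/
theorem finite_height_mem {p m : ℕ} (hp : p.Prime) {T : Type*} [AddCommGroup T]
    (hT : ∀ x : T, ∃ n : ℕ, p ^ n • x = 0) (hB : BassianFinite T)
    (φ : T →+ T) (hφ : Function.Injective φ) (y : T) (hy : p • y = 0)
    (h1 : y ∈ pPow p m T) (h2 : y ∉ pPow p (m + 1) T) : y ∈ φ.range := by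
  by_contra hyφ
  obtain ⟨z, hz⟩ := mem_pPow.1 h1
  let g : (Unit →₀ ℤ) →+ T := (zmultiplesHom T z).comp (Finsupp.applyAddHom ())
  have gdef : ∀ d : Unit →₀ ℤ, g d = d () • z := fun d => rfl
  have gm : ∀ d : Unit →₀ ℤ, g (p ^ m • d) = d () • y := fun d => by
    rw [map_nsmul, gdef, smul_comm, hz]
  have hpy : ∀ k : ℤ, (p : ℤ) ∣ k → k • y = 0 := by
    rintro _ ⟨l, rfl⟩
    rw [mul_comm, mul_smul, natCast_zsmul, hy, smul_zero]
  have hg : ∀ d, g (p ^ (m + 1) • d) = 0 := fun d => by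
    rw [pow_succ, mul_comm, mul_smul, map_nsmul, gm, smul_comm, hy, smul_zero]
  have ind : ∀ d : Unit →₀ ℤ, g (p ^ m • d) ∈ pPow p (m + 1) T → ∀ i, (p : ℤ) ∣ d i := by
    intro d hd i
    rw [gm] at hd
    by_contra hk
    exact h2 (mem_of_zsmul hp _ (by rw [hy]; exact AddSubgroup.zero_mem _) hk hd)
  obtain ⟨A, hA⟩ := exists_compl_range hp hT g hg ind
  have hyne : y ≠ 0 := fun h => h2 (h ▸ AddSubgroup.zero_mem _)
  have hgne : g.range ≠ ⊥ := by
    intro hbot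
    have : g (Finsupp.single () 1) ∈ g.range := ⟨_, rfl⟩
    rw [hbot, AddSubgroup.mem_bot, gdef] at this
    simp at this
    exact hyne (by rw [← hz, this, smul_zero])
  -- decomposition
  have hA' : IsCompl (AddSubgroup.toIntSubmodule A) (AddSubgroup.toIntSubmodule g.range) :=
    (AddSubgroup.toIntSubmodule (M := T)).isCompl hA
  let π := (AddSubgroup.toIntSubmodule A).projectionOnto _ hA'
  let ψ : T →+ A := (π.toAddMonoidHom : T →+ AddSubgroup.toIntSubmodule A).comp φ
  refine hB A g.range hA hgne ψ (inj_of_socle hT ψ ?_)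
  intro v hv hψ
  have hπ : π (φ v) = 0 := hψ
  have hmem : φ v ∈ g.range := by
    have := (Submodule.projectionOnto_apply_eq_zero_iff hA').1 hπ
    exact this
  obtain ⟨c, hc⟩ := hmem
  have hpc : g (p • c) = 0 := by rw [map_nsmul, hc, ← map_nsmul, hv, map_zero]
  obtain ⟨d, hd⟩ := ker_dvd g ind (p • c) (by rw [hpc]; exact AddSubgroup.zero_mem _)
  have hcd : c = p ^ m • d := by
    have : p • c = p • (p ^ m • d) := by rw [hd, smul_smul, pow_succ, mul_comm]
    refine Finsupp.ext fun i => ?_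
    have h3 := DFunLike.congr_fun this i
    simp only [Finsupp.smul_apply] at h3 ⊢
    exact smul_right_injective ℤ hp.ne_zero h3
  rw [hcd, gm] at hc
  by_cases hk : (p : ℤ) ∣ d ()
  · apply hφ
    rw [← hc, hpy _ hk, map_zero]
  · exact absurd (mem_of_zsmul hp φ.range (by rw [hy]; exact AddSubgroup.zero_mem _) hk
      (by rw [hc]; exact ⟨v, rfl⟩)) hyφ

theorem exists_height {p : ℕ} {T : Type*} [AddCommGroup T] {y : T} {n : ℕ}
    (h : y ∉ pPow p n T) : ∃ m, y ∈ pPow p m T ∧ y ∉ pPow p (m + 1) T := by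
  by_contra! hcon
  apply h
  clear h
  induction n with
  | zero => exact mem_pPow.2 ⟨y, by simp⟩
  | succ n ih => exact hcon n ih

theorem socle_le_range {p : ℕ} (hp : p.Prime) {T : Type*} [AddCommGroup T]
    (hT : ∀ x : T, ∃ n : ℕ, p ^ n • x = 0) (hB : BassianFinite T)
    (φ : T →+ T) (hφ : Function.Injective φ) (y : T) (hy : p • y = 0) : y ∈ φ.range := by
  by_contra hyφ
  have fin : ∀ u : T, p • u = 0 → ∀ n, u ∉ pPow p n T → u ∈ φ.range := by
    intro u hu n hn
    obtain ⟨m, h1, h2⟩ := exists_height hn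
    exact finite_height_mem hp hT hB φ hφ u hu h1 h2
  have hyinf : ∀ n, y ∈ pPow p n T := by
    intro n
    by_contra hn
    exact hyφ (fin y hy n hn)
  have all : ∀ u : T, p • u = 0 → ∀ n, u ∈ pPow p n T := by
    intro u hu n
    by_contra hn
    have h1 := fin u hu n hn
    have h2 := fin (u + y) (by rw [smul_add, hu, hy, add_zero]) n (fun h => hn (by
      have := AddSubgroup.sub_mem _ h (hyinf n)
      simpa using this))
    apply hyφ
    have := AddSubgroup.sub_mem _ h2 h1
    simpa using this
  have div : ∀ x : T, ∃ u : T, p • u = x := by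
    intro x
    obtain ⟨n, hn⟩ := hT x
    induction n generalizing x with
    | zero => exact ⟨0, by simpa using hn.symm⟩
    | succ n ih =>
      obtain ⟨u, hu⟩ := mem_pPow.1 (all (p ^ n • x)
        (by rw [smul_smul, mul_comm, ← pow_succ]; exact hn) (n + 1))
      obtain ⟨v, hv⟩ := ih (x - p • u) (by
        rw [smul_sub, ← hu, smul_smul, ← pow_succ, sub_self])
      exact ⟨v + u, by rw [smul_add, hv, sub_add_cancel]⟩
  obtain ⟨A, hA⟩ := exists_compl hp hT ⊥ φ.range disjoint_bot_left (by
    rintro A - - x a - _ ⟨c, rfl⟩ -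
    obtain ⟨u, rfl⟩ := div c
    exact ⟨φ u, ⟨u, rfl⟩, map_nsmul _ _ _⟩)
  refine hB φ.range A hA.symm ?_ φ.rangeRestrict ?_
  · rintro rfl
    have := hA.sup_eq_top
    rw [bot_sup_eq] at this
    exact hyφ (this ▸ AddSubgroup.mem_top y)
  · exact φ.rangeRestrict_injective_iff.2 hφ

/-- An infinite homogeneous pure part gives an injection missing a socle element. -/
theorem no_infinite {p m : ℕ} (hp : p.Prime) {T : Type*} [AddCommGroup T]
    (hT : ∀ x : T, ∃ n : ℕ, p ^ n • x = 0)
    (hS : ∀ φ : T →+ T, Function.Injective φ → ∀ y, p • y = 0 → y ∈ φ.range)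
    (g : (ℕ →₀ ℤ) →+ T)
    (hg : ∀ d, g (p ^ (m + 1) • d) = 0)
    (ind : ∀ d : ℕ →₀ ℤ, g (p ^ m • d) ∈ pPow p (m + 1) T → ∀ i, (p : ℤ) ∣ d i) :
    False := by
  obtain ⟨A, hA⟩ := exists_compl_range hp hT g hg ind
  let s : (ℕ →₀ ℤ) →+ (ℕ →₀ ℤ) := Finsupp.mapDomain.addMonoidHom Nat.succ
  have s0 : ∀ c, s c 0 = 0 := fun c => Finsupp.mapDomain_of_notMem_range _ _ (by simp)
  have ss : ∀ c i, s c (i + 1) = c i := fun c i =>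
    Finsupp.mapDomain_apply Nat.succ_injective c i
  have hker : ∀ c, g c = 0 ↔ ∃ d : ℕ →₀ ℤ, c = p ^ (m + 1) • d := by
    intro c
    constructor
    · intro h
      exact ker_dvd g ind c (by rw [h]; exact AddSubgroup.zero_mem _)
    · rintro ⟨d, rfl⟩
      exact hg d
  have hsker : ∀ c, g (s c) = 0 ↔ g c = 0 := by
    intro c
    rw [hker, hker]
    constructor
    · rintro ⟨d, hd⟩
      have := finsupp_exists_smul ((p ^ (m + 1) : ℕ) : ℤ) c (fun i => ⟨d (i + 1), by
        rw [← ss c i, hd, Finsupp.smul_apply]; simp⟩)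
      simpa only [natCast_zsmul] using this
    · rintro ⟨d, rfl⟩
      exact ⟨s d, map_nsmul _ _ _⟩
  let h : A × (ℕ →₀ ℤ) →+ T := A.subtype.coprod g
  let h' : A × (ℕ →₀ ℤ) →+ T := A.subtype.coprod (g.comp s)
  have hd : ∀ {x : T}, x ∈ A → x ∈ g.range → x = 0 := AddSubgroup.disjoint_def.1 hA.disjoint
  have split : ∀ (a : A) (c : ℕ →₀ ℤ), (a : T) + g c = 0 → (a : T) = 0 ∧ g c = 0 := by
    intro a c hac
    have h1 : (a : T) = 0 := hd a.2 (by
      rw [eq_neg_of_add_eq_zero_left hac]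
      exact AddSubgroup.neg_mem g.range ⟨c, rfl⟩)
    exact ⟨h1, by simpa [h1] using hac⟩
  have hsurj : Function.Surjective h := by
    intro x
    have hx : x ∈ A ⊔ g.range := hA.sup_eq_top ▸ AddSubgroup.mem_top x
    obtain ⟨a, ha, _, ⟨c, rfl⟩, hac⟩ := AddSubgroup.mem_sup.1 hx
    exact ⟨(⟨a, ha⟩, c), hac⟩
  have hle : h.ker ≤ h'.ker := by
    rintro ⟨a, c⟩ hac
    obtain ⟨h1, h2⟩ := split a c hac
    change (a : T) + g (s c) = 0
    rw [h1, (hsker c).2 h2, add_zero]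
  let ψ : T →+ T := h.liftOfSurjective hsurj ⟨h', hle⟩
  have hψ : ∀ x, ψ (h x) = h' x := fun x =>
    AddMonoidHom.liftOfRightInverse_comp_apply h _ _ ⟨h', hle⟩ x
  have hinj : Function.Injective ψ := by
    rw [injective_iff_map_eq_zero]
    intro x hx
    obtain ⟨⟨a, c⟩, rfl⟩ := hsurj x
    rw [hψ] at hx
    obtain ⟨h1, h2⟩ := split a (s c) hx
    change (a : T) + g c = 0
    rw [h1, (hsker c).1 h2, add_zero]
  obtain ⟨x, hx⟩ := hS ψ hinj (g (p ^ m • Finsupp.single 0 1)) (by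
    rw [← map_nsmul, smul_smul, mul_comm, ← pow_succ]; exact hg _)
  obtain ⟨⟨a, c⟩, rfl⟩ := hsurj x
  rw [hψ] at hx
  have hx' : (a : T) + g (s c) = g (p ^ m • Finsupp.single 0 1) := hx
  obtain ⟨-, h2⟩ := split a (s c - p ^ m • Finsupp.single 0 1) (by
    rw [map_sub, ← hx']; abel)
  obtain ⟨d, hd⟩ := (hker _).1 h2
  have h3 := DFunLike.congr_fun hd 0
  simp only [Finsupp.sub_apply, Finsupp.smul_apply, s0, Finsupp.single_eq_same, zero_sub,
    nsmul_eq_mul, mul_one] at h3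
  have h4 : ((p ^ (m + 1) : ℕ) : ℤ) ∣ ((p ^ m : ℕ) : ℤ) := ⟨-d 0, by rw [mul_neg, ← h3, neg_neg]⟩
  have h5 := Int.natCast_dvd_natCast.1 h4
  have := (Nat.pow_dvd_pow_iff_le_right hp.one_lt).1 h5
  omega

theorem reflects_height {p : ℕ} (hp : p.Prime) {T : Type*} [AddCommGroup T]
    (hT : ∀ x : T, ∃ n : ℕ, p ^ n • x = 0)
    (hS : ∀ φ : T →+ T, Function.Injective φ → ∀ y, p • y = 0 → y ∈ φ.range)
    (φ : T →+ T) (hφ : Function.Injective φ) (n : ℕ) :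
    ∀ w : T, p • w = 0 → φ w ∈ pPow p n T → w ∈ pPow p n T := by
  induction n using Nat.strong_induction_on with
  | _ n ih =>
  intro w hw hφw
  by_contra hwn
  obtain _ | m := n
  · exact hwn (mem_pPow.2 ⟨w, by simp⟩)
  have hpre : ∀ y : {y : T // p • y = 0}, ∃ x : {y : T // p • y = 0}, φ x = y := by
    rintro ⟨y, hy⟩
    obtain ⟨x, hx⟩ := hS φ hφ y hy
    exact ⟨⟨x, hφ (by rw [map_nsmul, hx, hy, map_zero])⟩, hx⟩
  choose r hr using hpre
  let W : ℕ → {y : T // p • y = 0} := fun i => r^[i] ⟨w, hw⟩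
  have W0 : (W 0 : T) = w := rfl
  have Ws : ∀ i, φ (W (i + 1)) = W i := fun i => by
    simp only [W, Function.iterate_succ_apply']; exact hr _
  have Wm : ∀ i, (W i : T) ∈ pPow p m T := by
    intro i
    induction i with
    | zero => exact ih m (by omega) w hw (pPow_le (by omega) hφw)
    | succ i hi => exact ih m (by omega) _ (W (i + 1)).2 (by rw [Ws]; exact hi)
  have Wit : ∀ N i, φ^[N] (W (i + N)) = W i := by
    intro N
    induction N with
    | zero => intro i; rfl
    | succ N hN => intro i; rw [Function.iterate_succ_apply, ← add_assoc, Ws, hN]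
  choose z hz using fun i => mem_pPow.1 (Wm i)
  let g : (ℕ →₀ ℤ) →+ T := (Finsupp.linearCombination ℤ z).toAddMonoidHom
  have gm : ∀ d : ℕ →₀ ℤ, g (p ^ m • d) = d.sum fun i a => a • (W i : T) := by
    intro d
    have : g d = d.sum fun i a => a • z i := Finsupp.linearCombination_apply _ _
    rw [map_nsmul, this, Finsupp.smul_sum]
    refine Finsupp.sum_congr fun i _ => ?_
    rw [smul_comm, hz]
  have hpW : ∀ (i : ℕ) (k : ℤ), (p : ℤ) ∣ k → k • (W i : T) = 0 := by
    rintro i _ ⟨l, rfl⟩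
    rw [mul_comm, mul_smul, natCast_zsmul, (W i).2, smul_zero]
  refine no_infinite (m := m) hp hT hS g ?_ ?_
  · intro d
    rw [pow_succ, mul_smul, gm]
    refine Finset.sum_eq_zero fun i _ => hpW i _ ⟨d i, ?_⟩
    simp
  · intro d hd
    rw [gm] at hd
    by_contra! hcon
    obtain ⟨i₀, hi₀⟩ := hcon
    let S := d.support.filter fun i => ¬ (p : ℤ) ∣ d i
    have hSn : S.Nonempty := ⟨i₀, by
      simp only [S, Finset.mem_filter, Finsupp.mem_support_iff]
      exact ⟨fun h => hi₀ (h ▸ dvd_zero _), hi₀⟩⟩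
    let N := S.max' hSn
    have hN : N ∈ S := S.max'_mem hSn
    have hNmax : ∀ i, N < i → (p : ℤ) ∣ d i := by
      intro i hi
      by_contra h
      have : i ∈ S := by
        simp only [S, Finset.mem_filter, Finsupp.mem_support_iff]
        exact ⟨fun h0 => h (h0 ▸ dvd_zero _), h⟩
      exact absurd (S.le_max' i this) (not_le.2 hi)
    have hNd : N ∈ d.support ∧ ¬ (p : ℤ) ∣ d N := by simpa only [S, Finset.mem_filter] using hN
    have hit : ∀ k, ∃ Φ : T →+ T, ∀ x, Φ x = φ^[k] x := by
      intro k
      induction k with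
      | zero => exact ⟨AddMonoidHom.id T, fun x => rfl⟩
      | succ k hk =>
        obtain ⟨Φ, hΦ⟩ := hk
        exact ⟨Φ.comp φ, fun x => by simp [hΦ]⟩
    obtain ⟨Φ, hΦ⟩ := hit N
    have h1 := pPow_map Φ hd
    have h2 : ∀ i ∈ d.support.erase N, Φ (d i • (W i : T)) ∈ pPow p (m + 1) T := by
      intro i hi
      have hne := Finset.ne_of_mem_erase hi
      rcases lt_or_gt_of_ne hne with hlt | hgt
      · rw [map_zsmul]
        apply AddSubgroup.zsmul_mem
        obtain ⟨k, hk⟩ : ∃ k, N = k + 1 + i := ⟨N - i - 1, by omega⟩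
        rw [hΦ, hk, Function.iterate_add_apply, ]
        have := Wit i 0
        rw [zero_add] at this
        rw [this, Function.iterate_succ_apply, W0]
        obtain ⟨Φ', hΦ'⟩ := hit k
        rw [← hΦ']
        exact pPow_map Φ' hφw
      · rw [hpW i _ (hNmax i hgt), map_zero]
        exact AddSubgroup.zero_mem _
    rw [Finsupp.sum, map_sum, ← Finset.add_sum_erase _ _ hNd.1] at h1
    have h3 := (AddSubgroup.add_mem_cancel_right _ (AddSubgroup.sum_mem _ h2)).1 h1
    have h4 := Wit N 0
    rw [zero_add] at h4
    rw [map_zsmul, hΦ, h4, W0] at h3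
    exact hwn (mem_of_zsmul hp _ (by rw [hw]; exact AddSubgroup.zero_mem _) hNd.2 h3)

theorem coHopfian_of_bassianFinite {p : ℕ} (hp : p.Prime) {T : Type*} [AddCommGroup T]
    (hT : ∀ x : T, ∃ n : ℕ, p ^ n • x = 0) (hB : BassianFinite T) : CoHopfian T := by
  intro φ hφ y
  have hS := fun φ hφ y hy => socle_le_range hp hT hB φ hφ y hy
  obtain ⟨n, hn⟩ := hT y
  induction n generalizing y with
  | zero => exact ⟨0, by simpa using hn.symm⟩
  | succ n ih =>
    have hs : p • (p ^ n • y) = 0 := by rw [smul_smul, mul_comm, ← pow_succ]; exact hn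
    obtain ⟨w, hw⟩ := hS φ hφ (p ^ n • y) hs
    have hw0 : p • w = 0 := hφ (by rw [map_nsmul, hw, hs, map_zero])
    obtain ⟨u, hu⟩ := mem_pPow.1 (reflects_height hp hT hS φ hφ n w hw0
      (by rw [hw]; exact mem_pPow.2 ⟨y, rfl⟩))
    obtain ⟨v, hv⟩ := ih (y - φ u) (by rw [smul_sub, ← map_nsmul, hu, hw, sub_self])
    exact ⟨v + u, by rw [map_add, hv, sub_add_cancel]⟩

/-- For an abelian `p`-group `T`, the following are equivalent:
(a) `T` is Bassian-finite; (b) `T` is co-Hopfian; (c) `T` is relatively co-Hopfian. -/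
theorem pGroup_bassianFinite_tfae (p : ℕ) (hp : p.Prime) (T : Type*) [AddCommGroup T]
    (hT : ∀ x : T, ∃ n : ℕ, p ^ n • x = 0) :
    List.TFAE [BassianFinite T, CoHopfian T, RelativelyCoHopfian T] := by
  tfae_have 1 → 2 := coHopfian_of_bassianFinite hp hT
  tfae_have 2 → 3 := by
    intro h φ hφ B hB
    rw [AddMonoidHom.range_eq_top.2 (h φ hφ), top_inf_eq]
    exact hB
  tfae_have 3 → 1 := by
    intro h A B hAB hB φ hφ
    apply h (A.subtype.comp φ) (A.subtype_injective.comp hφ) B hB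
    rw [eq_bot_iff, ← hAB.inf_eq_bot]
    refine inf_le_inf_right _ ?_
    rintro _ ⟨x, rfl⟩
    exact (φ x).2
  tfae_finish
end

section
/- Suppose G = ⊕_{i∈I} A_i is an internal direct sum of abelian groups with each A_i ≠ 0. If G has finite injective rank, then the index set I is finite. -/
/-- An abelian group `G` has *finite injective rank* if an endomorphism `φ` of `G`
is injective exactly when the quotient `G / φ(G)` is finite. -/
def FiniteInjectiveRank (G : Type*) [AddCommGroup G] : Prop :=
  ∀ φ : G →+ G, Function.Injective φ ↔ Finite (G ⧸ φ.range)

namespace FIRAux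

theorem surj_inj {G : Type*} [AddCommGroup G] (h : FiniteInjectiveRank G)
    (C : Submodule ℤ G) (hdiv : ∀ n : ℤ, n ≠ 0 → ∀ x ∈ C, ∃ y ∈ C, n • y = x)
    (ψ : C →ₗ[ℤ] C) (hψ : Function.Surjective ψ) : Function.Injective ψ := by
  have hb : Module.Baer ℤ C := by
    have hs : ∀ {n : ℤ}, n ≠ 0 → Function.Surjective (fun a : C => n • a) := by
      intro n hn x
      obtain ⟨y, hy, e⟩ := hdiv n hn x x.2
      exact ⟨⟨y, hy⟩, Subtype.ext e⟩
    letI : DivisibleBy C ℤ := divisibleByOfSMulRightSurj C ℤ hs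
    exact Module.Baer.of_divisible C
  obtain ⟨r, hr⟩ := hb.extension_property C.subtype (Submodule.injective_subtype C) LinearMap.id
  have hr' : ∀ c : C, r c = c := fun c => by simpa using LinearMap.congr_fun hr c
  let φ : G →ₗ[ℤ] G := LinearMap.id - C.subtype ∘ₗ r + C.subtype ∘ₗ ψ ∘ₗ r
  have hφ : ∀ g, φ g = g - r g + ψ (r g) := fun g => rfl
  have hsurj : Function.Surjective φ := by
    intro g
    obtain ⟨c, hc⟩ := hψ (r g)
    refine ⟨g - r g + c, ?_⟩
    rw [hφ]
    have : r (g - r g + c) = c := by simp [hr']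
    rw [this, hc]
    abel
  have hinj : Function.Injective φ.toAddMonoidHom := by
    rw [h]
    have : φ.toAddMonoidHom.range = ⊤ := AddMonoidHom.range_eq_top.2 hsurj
    rw [this]
    infer_instance
  intro a b hab
  apply Subtype.ext
  apply hinj
  change φ a = φ b
  rw [hφ, hφ, hr', hr', hab]
  simp

theorem no_cyclic {G : Type*} [AddCommGroup G] (h : FiniteInjectiveRank G)
    (p : ℕ) (hp : p.Prime) (k : ℕ) (y : G) (hy : p ^ (k + 1) • y = 0)
    (hn : ∀ z : G, p ^ (k + 1) • z ≠ p ^ k • y) : False := by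
  haveI : Fact p.Prime := ⟨hp⟩
  have hpos : 0 < p ^ (k + 1) := pow_pos hp.pos _
  let N : AddSubgroup G := (nsmulAddMonoidHom (α := G) (p ^ (k + 1))).range
  have hx : (QuotientAddGroup.mk (p ^ k • y) : G ⧸ N) ≠ 0 := by
    intro h0
    rw [QuotientAddGroup.eq_zero_iff] at h0
    obtain ⟨z, hz⟩ := h0
    exact hn z hz
  obtain ⟨c, hc⟩ := CharacterModule.exists_character_apply_ne_zero_of_ne_zero hx
  let c' : (G ⧸ N) →+ AddCircle (1 : ℚ) := c
  let f : G →+ AddCircle (1 : ℚ) := c'.comp (QuotientAddGroup.mk' N)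
  have hfx : f (p ^ k • y) ≠ 0 := hc
  have hf0 : ∀ z, p ^ (k + 1) • f z = 0 := by
    intro z
    rw [← map_nsmul]
    have : (QuotientAddGroup.mk' N) (p ^ (k + 1) • z) = 0 := by
      rw [QuotientAddGroup.mk'_apply, QuotientAddGroup.eq_zero_iff]
      exact ⟨z, rfl⟩
    change c' _ = 0
    rw [this, map_zero]
  have hord : addOrderOf (f y) = p ^ (k + 1) :=
    addOrderOf_eq_prime_pow (by rwa [← map_nsmul]) (hf0 y)
  have hgen : ∀ z, ∃ m : ℤ, f z = m • f y := by
    intro z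
    haveI : Fact ((0 : ℚ) < 1) := ⟨one_pos⟩
    obtain ⟨m, -, hm1, hm⟩ := (AddCircle.addOrderOf_eq_pos_iff hpos).1 hord
    obtain ⟨j, -, hj⟩ := (AddCircle.nsmul_eq_zero_iff hpos).1 (hf0 z)
    have hone : ∃ t : ℤ, ((1 / (p ^ (k + 1) : ℕ) * 1 : ℚ) : AddCircle (1 : ℚ)) = t • f y := by
      have hbez := Nat.gcd_eq_gcd_ab m (p ^ (k + 1))
      rw [hm1] at hbez
      refine ⟨m.gcdA (p ^ (k + 1)), ?_⟩
      have hn0 : ((p ^ (k + 1) : ℕ) : ℚ) ≠ 0 := by exact_mod_cast hpos.ne'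
      have hbez' : (1 : ℚ) = m * (m.gcdA (p ^ (k + 1)) : ℚ) +
          ((p ^ (k + 1) : ℕ) : ℚ) * (m.gcdB (p ^ (k + 1)) : ℚ) := by
        exact_mod_cast hbez
      generalize m.gcdA (p ^ (k + 1)) = α at *
      generalize m.gcdB (p ^ (k + 1)) = β at *
      have hsum : (1 / (p ^ (k + 1) : ℕ) * 1 : ℚ) =
          α • ((m : ℚ) / (p ^ (k + 1) : ℕ) * 1) + β • (1 : ℚ) := by
        rw [zsmul_eq_mul, zsmul_eq_mul]
        generalize ((p ^ (k + 1) : ℕ) : ℚ) = q at *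
        field_simp
        linarith
      rw [← hm, ← AddCircle.coe_zsmul, hsum, AddCircle.coe_add, AddCircle.coe_zsmul _ (n := β),
        AddCircle.coe_period, smul_zero, add_zero]
    obtain ⟨t, ht⟩ := hone
    refine ⟨j * t, ?_⟩
    rw [mul_smul, ← ht, ← hj, ← AddCircle.coe_zsmul]
    congr 1
    simp
    ring
  let F : G →ₗ[ℤ] AddCircle (1 : ℚ) := f.toIntLinearMap
  have hF : ∀ z, F z = f z := fun _ => rfl
  have hcompl : IsCompl (LinearMap.ker F) (Submodule.span ℤ {y}) := by
    constructor
    · rw [Submodule.disjoint_def]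
      intro z hz1 hz2
      obtain ⟨m, rfl⟩ := Submodule.mem_span_singleton.1 hz2
      rw [LinearMap.mem_ker, hF, map_zsmul, ← addOrderOf_dvd_iff_zsmul_eq_zero, hord] at hz1
      obtain ⟨t, rfl⟩ := hz1
      rw [mul_comm, mul_smul, natCast_zsmul, hy, smul_zero]
    · rw [codisjoint_iff, eq_top_iff]
      intro z _
      obtain ⟨m, hm⟩ := hgen z
      have : z = (z - m • y) + m • y := by abel
      rw [this]
      refine Submodule.add_mem_sup ?_ (Submodule.mem_span_singleton.2 ⟨m, rfl⟩)
      rw [LinearMap.mem_ker, hF, map_sub, map_zsmul, hm, sub_self]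
  let π := (LinearMap.ker F).projection _ hcompl
  have hπ : ∀ z, f z = 0 → π z = z := fun z hz =>
    Submodule.projection_apply_of_mem_left hcompl hz
  have hπy : π y = 0 := by
    apply Submodule.projection_apply_of_mem_right hcompl
    exact Submodule.mem_span_singleton_self y
  have hy0 : y = 0 := by
    have hinj : Function.Injective π.toAddMonoidHom := by
      rw [h]
      let q : Fin (p ^ (k + 1)) → G ⧸ π.toAddMonoidHom.range :=
        fun i => QuotientAddGroup.mk ((i : ℕ) • y)
      apply Finite.of_surjective q
      intro z
      obtain ⟨z, rfl⟩ := QuotientAddGroup.mk_surjective z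
      obtain ⟨m, hm⟩ := hgen z
      have hpz : ((p ^ (k + 1) : ℕ) : ℤ) ≠ 0 := by exact_mod_cast hpos.ne'
      have h1 : 0 ≤ m % (p ^ (k + 1) : ℕ) := Int.emod_nonneg _ hpz
      have h2 : m % (p ^ (k + 1) : ℕ) < (p ^ (k + 1) : ℕ) :=
        Int.emod_lt_of_pos _ (by exact_mod_cast hpos)
      refine ⟨⟨(m % (p ^ (k + 1) : ℕ)).toNat, by omega⟩, ?_⟩
      change QuotientAddGroup.mk (_ • y) = _
      rw [QuotientAddGroup.eq]
      refine ⟨_, hπ _ ?_⟩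
      have h3 : ((m % (p ^ (k + 1) : ℕ)).toNat : ℕ) • f y = m • f y := by
        rw [← natCast_zsmul, Int.toNat_of_nonneg h1]
        conv_rhs => rw [← Int.emod_add_mul_ediv m (p ^ (k + 1) : ℕ)]
        rw [add_smul, mul_comm, mul_smul, natCast_zsmul, hf0, smul_zero, add_zero]
      rw [map_add, map_neg, map_nsmul, hm, h3]
      abel
    apply hinj
    change π y = π 0
    rw [hπy, map_zero]
  exact hn 0 (by rw [hy0, smul_zero, smul_zero])

theorem torsion_free_prime {G : Type*} [AddCommGroup G] (h : FiniteInjectiveRank G)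
    (p : ℕ) (hp : p.Prime) (x : G) (hx : p • x = 0) : x = 0 := by
  have key : ∀ m : ℕ, ∀ t : G, p ^ m • t = 0 → ∀ j : ℕ, ∃ s, p ^ j • s = t := by
    have sock : ∀ t : G, p • t = 0 → ∀ j : ℕ, ∃ s, p ^ j • s = t := by
      intro t ht j
      induction j with
      | zero => exact ⟨t, by simp⟩
      | succ j ih =>
        obtain ⟨s, hs⟩ := ih
        by_contra hcon
        push Not at hcon
        refine no_cyclic h p hp j s ?_ ?_
        · rw [pow_succ', mul_smul, hs, ht]
        · intro z
          rw [hs]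
          exact hcon z
    intro m
    induction m with
    | zero =>
      intro t ht j
      exact ⟨0, by simpa using ht.symm⟩
    | succ m ih =>
      intro t ht j
      obtain ⟨s, hs⟩ := sock (p ^ m • t) (by rw [← mul_smul, ← pow_succ', ht]) (m + j)
      obtain ⟨s', hs'⟩ := ih (t - p ^ j • s) (by
        rw [smul_sub, ← mul_smul, ← pow_add, hs, sub_self]) j
      exact ⟨s' + s, by rw [smul_add, hs']; abel⟩
  let T : Submodule ℤ G :=
    { carrier := {t | ∃ m : ℕ, p ^ m • t = 0}
      zero_mem' := ⟨0, by simp⟩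
      add_mem' := by
        rintro a b ⟨m, hm⟩ ⟨n, hn⟩
        refine ⟨m + n, ?_⟩
        rw [smul_add, pow_add, mul_smul, mul_smul, hn, smul_comm, hm, smul_zero, smul_zero,
          add_zero]
      smul_mem' := by
        rintro c a ⟨m, hm⟩
        exact ⟨m, by rw [smul_comm, hm, smul_zero]⟩ }
  have hT : ∀ t, t ∈ T ↔ ∃ m : ℕ, p ^ m • t = 0 := fun _ => Iff.rfl
  have hpdiv : ∀ j : ℕ, ∀ t ∈ T, ∃ s ∈ T, p ^ j • s = t := by
    rintro j t ⟨m, hm⟩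
    obtain ⟨s, hs⟩ := key m t hm j
    exact ⟨s, ⟨m + j, by rw [pow_add, mul_smul, hs, hm]⟩, hs⟩
  have hdiv : ∀ n : ℤ, n ≠ 0 → ∀ x ∈ T, ∃ y ∈ T, n • y = x := by
    intro n hn t ht
    obtain ⟨m, hm⟩ := ht
    obtain ⟨a, u, hu, hau⟩ : ∃ (a : ℕ) (u : ℤ), IsCoprime u (p : ℤ) ∧ n = p ^ a * u := by
      have hfin : FiniteMultiplicity (p : ℤ) n := Int.finiteMultiplicity_iff.2
        ⟨by simpa using hp.ne_one, hn⟩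
      obtain ⟨u, hu, hnd⟩ := hfin.exists_eq_pow_mul_and_not_dvd
      refine ⟨_, u, ?_, hu⟩
      exact ((Nat.prime_iff_prime_int.1 hp).coprime_iff_not_dvd.2 hnd).symm
    obtain ⟨s, hs, hst⟩ := hpdiv a t ⟨m, hm⟩
    obtain ⟨l, hl⟩ := hs
    obtain ⟨b, d, hbd⟩ : IsCoprime u ((p : ℤ) ^ l) := hu.pow_right
    refine ⟨b • s, T.smul_mem b ⟨l, hl⟩, ?_⟩
    have hl' : (p ^ l : ℤ) • s = 0 := by
      rw [← hl, ← natCast_zsmul]; push_cast; rfl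
    have h1 : (u * b) • s = s := by
      have : u * b = 1 - d * p ^ l := by linarith
      rw [this, sub_smul, mul_smul, hl', smul_zero, one_smul, sub_zero]
    rw [hau, mul_smul, ← mul_smul u b, h1, ← hst, ← natCast_zsmul]
    push_cast
    rfl
  have := surj_inj h T hdiv ((p : ℤ) • LinearMap.id) (by
    intro t
    obtain ⟨s, hs, hst⟩ := hpdiv 1 t t.2
    refine ⟨⟨s, hs⟩, Subtype.ext ?_⟩
    simpa using hst)
  have hxT : x ∈ T := ⟨1, by simpa using hx⟩
  have h0 : (⟨x, hxT⟩ : T) = 0 := by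
    apply this
    apply Subtype.ext
    simpa using hx
  exact congrArg Subtype.val h0

theorem torsion_free {G : Type*} [AddCommGroup G] (h : FiniteInjectiveRank G)
    (n : ℤ) (hn : n ≠ 0) (x : G) (hx : n • x = 0) : x = 0 := by
  have key : ∀ m : ℕ, m ≠ 0 → ∀ x : G, m • x = 0 → x = 0 := by
    intro m
    induction m using Nat.recOnMul with
    | zero => simp
    | one => simp
    | prime p hp => exact fun _ x hx => torsion_free_prime h p hp x hx
    | mul a b iha ihb =>
      intro hab x hx
      rw [mul_smul] at hx
      exact ihb (right_ne_zero_of_mul hab) x (iha (left_ne_zero_of_mul hab) _ hx)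
  apply key n.natAbs (Int.natAbs_ne_zero.2 hn)
  rcases Int.natAbs_eq n with e | e
  · rw [e, natCast_zsmul] at hx; exact hx
  · rw [e, neg_smul, natCast_zsmul, neg_eq_zero] at hx; exact hx

/-- An infinite independent family of divisible elements is impossible. -/
theorem no_shift {G : Type*} [AddCommGroup G] (h : FiniteInjectiveRank G)
    (a : ℕ → G) (hli : LinearIndependent ℤ a)
    (hd : ∀ k, ∀ n : ℤ, n ≠ 0 → ∃ y, n • y = a k) : False := by
  have tf := torsion_free h
  let ι : (ℕ →₀ ℤ) →ₗ[ℤ] G := Finsupp.linearCombination ℤ a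
  have hι : Function.Injective ι := hli
  have hιd : ∀ f, ∀ n : ℤ, n ≠ 0 → ∃ y, n • y = ι f := by
    intro f n hn
    choose y hy using fun k => hd k n hn
    refine ⟨Finsupp.linearCombination ℤ y f, ?_⟩
    simp only [ι, Finsupp.linearCombination_apply, Finsupp.sum, Finset.smul_sum]
    refine Finset.sum_congr rfl fun k _ => ?_
    rw [smul_comm, hy]
  let C : Submodule ℤ G :=
    { carrier := {x | ∃ n : ℤ, n ≠ 0 ∧ ∃ f, n • x = ι f}
      zero_mem' := ⟨1, one_ne_zero, 0, by simp⟩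
      add_mem' := by
        rintro x y ⟨m, hm, f, hf⟩ ⟨n, hn, g, hg⟩
        refine ⟨m * n, mul_ne_zero hm hn, n • f + m • g, ?_⟩
        rw [map_add, map_smul, map_smul, ← hf, ← hg, smul_add, mul_smul, mul_smul, smul_comm m n x]
      smul_mem' := by
        rintro c x ⟨m, hm, f, hf⟩
        exact ⟨m, hm, c • f, by rw [map_smul, ← hf, smul_comm]⟩ }
  have hιC : ∀ f, ι f ∈ C := fun f => ⟨1, one_ne_zero, f, by simp⟩
  have hdiv : ∀ n : ℤ, n ≠ 0 → ∀ x ∈ C, ∃ y ∈ C, n • y = x := by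
    rintro n hn x ⟨m, hm, f, hf⟩
    obtain ⟨y, hy⟩ := hιd f (m * n) (mul_ne_zero hm hn)
    refine ⟨y, ⟨m * n, mul_ne_zero hm hn, f, hy⟩, ?_⟩
    rw [← sub_eq_zero]
    apply tf m hm
    rw [smul_sub, ← mul_smul, hy, hf, sub_self]
  have hb : Module.Baer ℤ C := by
    have hs : ∀ {n : ℤ}, n ≠ 0 → Function.Surjective (fun a : C => n • a) := by
      intro n hn x
      obtain ⟨y, hy, e⟩ := hdiv n hn x x.2
      exact ⟨⟨y, hy⟩, Subtype.ext e⟩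
    letI : DivisibleBy C ℤ := divisibleByOfSMulRightSurj C ℤ hs
    exact Module.Baer.of_divisible C
  let ι' : (ℕ →₀ ℤ) →ₗ[ℤ] C := ι.codRestrict C hιC
  have hι' : Function.Injective ι' := fun f g hfg => hι (congrArg Subtype.val hfg)
  let S : (ℕ →₀ ℤ) →ₗ[ℤ] (ℕ →₀ ℤ) := Finsupp.lcomapDomain Nat.succ Nat.succ_injective
  have hSs : Function.Surjective S := fun f =>
    ⟨Finsupp.mapDomain Nat.succ f, Finsupp.comapDomain_mapDomain _ Nat.succ_injective _⟩
  have hS0 : S (Finsupp.single 0 1) = 0 := by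
    ext k
    simp [S]
  obtain ⟨ψ, hψ⟩ := hb.extension_property ι' hι' (ι' ∘ₗ S)
  have hψ' : ∀ f, ψ (ι' f) = ι' (S f) := fun f => LinearMap.congr_fun hψ f
  have hinj := surj_inj h C hdiv ψ (by
    rintro ⟨c, hc⟩
    obtain ⟨n, hn, f, hf⟩ := hc
    obtain ⟨g, hg⟩ := hSs f
    obtain ⟨c', hc', e⟩ := hdiv n hn _ (hιC g)
    refine ⟨⟨c', hc'⟩, ?_⟩
    have e' : n • (⟨c', hc'⟩ : C) = ι' g := Subtype.ext e
    have h1 : n • ψ ⟨c', hc'⟩ = ι' f := by rw [← map_smul, e', hψ', hg]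
    apply Subtype.ext
    rw [← sub_eq_zero]
    apply tf n hn
    have h2 : n • (ψ ⟨c', hc'⟩ : G) = ι f := congrArg Subtype.val h1
    rw [smul_sub, h2, hf, sub_self])
  have h0 : ι' (Finsupp.single 0 1) = 0 := by
    apply hinj
    rw [hψ', hS0, map_zero, map_zero]
  have h1 := hι' (h0.trans (map_zero ι').symm)
  simp at h1

end FIRAux

open FIRAux in
/-- If `G = ⨁_{i ∈ I} A i` is an internal direct sum of nonzero subgroups and `G` has
finite injective rank, then the index set `I` is finite. -/
theorem finite_index_of_finiteInjectiveRank (G : Type*) [AddCommGroup G]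
    {I : Type*} [DecidableEq I] (A : I → AddSubgroup G)
    (hinternal : DirectSum.IsInternal A) (hne : ∀ i, A i ≠ ⊥)
    (h : FiniteInjectiveRank G) : Finite I := by
  classical
  have tf := torsion_free h
  let e : (DirectSum I fun i => A i) ≃+ G :=
    AddEquiv.ofBijective (DirectSum.coeAddMonoidHom A) hinternal
  have he : ∀ i (a : A i), e (DirectSum.of (fun i => A i) i a) = a := fun i a =>
    DirectSum.coeAddMonoidHom_of A i a
  have hes : ∀ i (a : A i), e.symm (a : G) = DirectSum.of (fun i => A i) i a := fun i a => by
    rw [AddEquiv.symm_apply_eq, he]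
  let J : Set I := {i | ∃ n : ℤ, n ≠ 0 ∧ ∃ a : A i, ∀ b : A i, n • b ≠ a}
  have hJ : J.Finite := by
    have hJ' : ∀ i, ∃ n : ℤ, n ≠ 0 ∧ (i ∈ J → ∃ a : A i, ∀ b : A i, n • b ≠ a) := by
      intro i
      by_cases hi : i ∈ J
      · obtain ⟨n, hn, ha⟩ := hi
        exact ⟨n, hn, fun _ => ha⟩
      · exact ⟨1, one_ne_zero, fun h => absurd h hi⟩
    choose n hn hna using hJ'
    let D : (DirectSum I fun i => A i) →+ (DirectSum I fun i => A i) :=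
      DirectSum.map (fun i => zsmulAddGroupHom (n i))
    have hD : ∀ x i, D x i = n i • x i := fun x i => rfl
    let φ : G →+ G := e.toAddMonoidHom.comp (D.comp e.symm.toAddMonoidHom)
    have hφ : ∀ g, φ g = e (D (e.symm g)) := fun g => rfl
    have hinj : Function.Injective φ := by
      rw [injective_iff_map_eq_zero]
      intro g hg
      rw [hφ, EmbeddingLike.map_eq_zero_iff] at hg
      have : e.symm g = 0 := by
        ext i
        have h1 : D (e.symm g) i = 0 := by rw [hg]; rfl
        rw [hD] at h1
        have h2 := congrArg Subtype.val h1
        exact tf (n i) (hn i) _ h2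
      simpa using this
    have hfin := (h φ).1 hinj
    choose a ha using fun j : J => hna j j.2
    have : Finite J := by
      refine Finite.of_injective
        (fun j : J => (QuotientAddGroup.mk ((a j : G)) : G ⧸ φ.range)) ?_
      intro j k hjk
      by_contra hne
      rw [QuotientAddGroup.eq] at hjk
      obtain ⟨g, hg⟩ := hjk
      rw [hφ, ← AddEquiv.eq_symm_apply, map_add, map_neg, hes, hes] at hg
      have h1 := DFunLike.congr_fun hg (j : I)
      rw [hD] at h1
      have hne' : (k : I) ≠ j := fun hh => hne (Subtype.ext hh.symm)
      rw [DirectSum.add_apply, show ∀ (z : DirectSum I fun i => A i) (i : I), (-z) i = -(z i) from fun _ _ => rfl, DirectSum.of_eq_same,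
        DirectSum.of_eq_of_ne _ _ _ hne'.symm, add_zero] at h1
      exact ha j (-(e.symm g j)) (by rw [smul_neg, h1, neg_neg])
    exact Set.toFinite J
  by_contra hI
  rw [not_finite_iff_infinite] at hI
  have hJc : (Jᶜ).Infinite := hJ.infinite_compl
  haveI := hJc.to_subtype
  let s : ℕ ↪ (Jᶜ : Set I) := Infinite.natEmbedding _
  have hx : ∀ i, ∃ a : A i, a ≠ 0 := by
    intro i
    by_contra hcon
    push Not at hcon
    exact hne i ((AddSubgroup.eq_bot_iff_forall _).2 fun x hx => congrArg Subtype.val (hcon ⟨x, hx⟩))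
  choose x hx using hx
  refine no_shift h (fun k => (x (s k) : G)) ?_ ?_
  · rw [linearIndependent_iff']
    intro t c hc k hk
    have h1 := congrArg e.symm hc
    rw [map_sum, map_zero] at h1
    have h2 := DFunLike.congr_fun h1 (s k : I)
    rw [DirectSum.zero_apply, DirectSum.sum_apply, Finset.sum_eq_single k] at h2
    · rw [map_zsmul, hes, DirectSum.smul_apply, DirectSum.of_eq_same] at h2
      by_contra hck
      exact hx (s k) (Subtype.ext (tf _ hck _ (congrArg Subtype.val h2)))
    · intro l _ hl
      rw [map_zsmul, hes, DirectSum.smul_apply, DirectSum.of_eq_of_ne, smul_zero]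
      intro hh
      exact hl (s.injective (Subtype.ext hh)).symm
    · exact fun hh => absurd hk hh
  · intro k n hn
    have hk : (s k : I) ∉ J := (s k).2
    by_contra hcon
    push Not at hcon
    exact hk ⟨n, hn, x (s k), fun b hb => hcon b (congrArg Subtype.val hb)⟩
end
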